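/- Let Ω ⊆ ℝ^n be nonempty and J : Ω → ℝ^p. If β ∈ ℝ^p satisfies β_i > 0 for all i and x* ∈ Ω minimizes λ ↦ ∑_{i=1}^p β_i J_i(λ) over Ω, then x* is properly Pareto efficient: there exists a convex cone C ⊆ ℝ^p with the nonnegative orthant ℝ^p_+ contained in the interior of C together with the origin, such that for every x' ∈ Ω with J(x*) − J(x') ∈ C one has J(x') = J(x*). -/

import Mathlib

/-!
A minimizer `x` of `f ∘ J`, with `f` a strictly positive continuous linear functional, satisfies
`f (J x - J x') ≤ 0` for every feasible `x'`. The half-space `{v | 0 < f v}` therefore contains no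
improvement `J x - J x'`, and it is an open convex cone containing every `v > 0`.
-/

section Cone

variable {R E : Type*} [Ring R] [LinearOrder R] [IsStrictOrderedRing R]
  [AddCommGroup E] [Module R E]

/-- The open half-space `{v | 0 < f v}` as a convex cone. It omits the origin, which is harmless in
`IsProperlyParetoEfficientOn`: adjoining `0` to a cone preserves the conditions there. -/
def openHalfSpaceCone (f : E →ₗ[R] R) : ConvexCone R E :=
  (ConvexCone.strictlyPositive R R).comap f

theorem mem_openHalfSpaceCone {f : E →ₗ[R] R} {v : E} : v ∈ openHalfSpaceCone f ↔ 0 < f v :=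
  .rfl

theorem isOpen_openHalfSpaceCone [TopologicalSpace R] [ClosedIicTopology R] [TopologicalSpace E]
    (f : E →L[R] R) : IsOpen (openHalfSpaceCone f.toLinearMap : Set E) :=
  isOpen_Ioi.preimage f.continuous

theorem sub_notMem_openHalfSpaceCone {α : Type*} {f : E →ₗ[R] R} {J : α → E} {s : Set α}
    {x x' : α} (hmin : IsMinOn (f ∘ J) s x) (hx' : x' ∈ s) :
    J x - J x' ∉ openHalfSpaceCone f := by
  rw [mem_openHalfSpaceCone, map_sub, sub_pos]
  exact (isMinOn_iff.1 hmin x' hx').not_gt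

end Cone

section ParetoEfficiency

variable {E α : Type*}

/-- Proper Pareto efficiency of `x` for the vector objective `J` on the feasible set `s`: no
feasible point improves on `x` with respect to some convex cone whose interior contains every
nonzero nonnegative vector. As for `IsMinOn`, `x ∈ s` is not part of the notion. -/
def IsProperlyParetoEfficientOn (R : Type*) [Semiring R] [PartialOrder R] [AddCommGroup E]
    [LE E] [SMul R E] [TopologicalSpace E] (J : α → E) (s : Set α) (x : α) : Prop :=
  ∃ C : ConvexCone R E, {v | 0 ≤ v} ⊆ interior (C : Set E) ∪ {0} ∧
    ∀ x' ∈ s, J x - J x' ∈ C → J x' = J x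

theorem scalarization_pos_properly_pareto_general {R : Type*} [Ring R] [LinearOrder R]
    [IsStrictOrderedRing R] [TopologicalSpace R] [ClosedIicTopology R] [AddCommGroup E]
    [PartialOrder E] [Module R E] [TopologicalSpace E]
    {f : E →L[R] R} (hf : ∀ v, 0 < v → 0 < f v) {J : α → E} {s : Set α} {x : α}
    (hmin : IsMinOn (f ∘ J) s x) : IsProperlyParetoEfficientOn R J s x := by
  refine ⟨openHalfSpaceCone f.toLinearMap, fun v hv ↦ ?_, fun x' hx' hC ↦
    (sub_notMem_openHalfSpaceCone hmin hx' hC).elim⟩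
  rw [(isOpen_openHalfSpaceCone f).interior_eq]
  exact (eq_or_lt_of_le hv).symm.imp (hf v) Eq.symm

end ParetoEfficiency

section WeightedSum

variable {R ι : Type*} [Fintype ι]

theorem dotProduct_pos_of_forall_pos [Semiring R] [PartialOrder R] [IsStrictOrderedRing R]
    {w v : ι → R} (hw : ∀ i, 0 < w i) (hv : 0 < v) : 0 < w ⬝ᵥ v := by
  obtain ⟨hv₀, j, hj⟩ := Pi.lt_def.1 hv
  exact Finset.sum_pos' (fun i _ ↦ mul_nonneg (hw i).le (hv₀ i))
    ⟨j, Finset.mem_univ j, mul_pos (hw j) hj⟩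

/-- The functional `v ↦ ∑ i, w i * v i` that scalarizes a vector objective with weights `w`. -/
def weightedSum [CommSemiring R] [TopologicalSpace R] [IsTopologicalSemiring R] (w : ι → R) :
    (ι → R) →L[R] R where
  toFun v := w ⬝ᵥ v
  map_add' := dotProduct_add w
  map_smul' c v := dotProduct_smul c w v
  cont := by fun_prop

end WeightedSum

/-- If `β i > 0` for all `i` and `x ∈ Ω` minimizes the scalarized
objective `λ ↦ ∑ i, β i * J i λ` over `Ω`, then `x` is properly Pareto efficient:
there is a convex cone `C ⊆ ℝ^p` with the nonnegative orthant contained in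
`interior C ∪ {0}` such that `J x - J x' ∈ C` forces `J x' = J x` for `x' ∈ Ω`. -/
theorem scalarization_pos_properly_pareto
    {n p : ℕ} (Ω : Set (Fin n → ℝ)) (hΩ : Ω.Nonempty)
    (J : (Fin n → ℝ) → Fin p → ℝ)
    (β : Fin p → ℝ) (hβ : ∀ i, 0 < β i)
    (x : Fin n → ℝ) (hx : x ∈ Ω)
    (hmin : ∀ x' ∈ Ω, ∑ i, β i * J x i ≤ ∑ i, β i * J x' i) :
    ∃ C : Set (Fin p → ℝ), Convex ℝ C ∧
      (∀ c ∈ C, ∀ t : ℝ, 0 < t → t • c ∈ C) ∧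
      {v : Fin p → ℝ | ∀ i, 0 ≤ v i} ⊆ interior C ∪ {0} ∧
      ∀ x' ∈ Ω, J x - J x' ∈ C → J x' = J x := by
  obtain ⟨C, hC, hJ⟩ := scalarization_pos_properly_pareto_general (f := weightedSum β)
    (fun _ ↦ dotProduct_pos_of_forall_pos hβ) (isMinOn_iff.2 hmin)
  exact ⟨C, C.convex, fun _ hc _ ht ↦ C.smul_mem ht hc, hC, hJ⟩
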